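/- Let (V_0, X, Y) be a reducing triple for a graph G and let G' = G − X − V_0 (delete the edges in X and the vertices in V_0). If τ(G') ≤ 2·ν(G'), then τ(G) ≤ 2·ν(G). -/

import Mathlib

open SimpleGraph

variable {V : Type*}

/-- A triangle transversal of `G`: a set of edges of `G` meeting every triangle of `G`
(so that its removal leaves a triangle-free graph). -/
def IsTriangleTransversal (G : SimpleGraph V) (X : Finset (Sym2 V)) : Prop :=
  ↑X ⊆ G.edgeSet ∧
    ∀ t : Finset V, G.IsNClique 3 t → ∃ e ∈ X, ∀ v ∈ e, v ∈ t

/-- A triangle packing of `G`: a set of pairwise edge-disjoint triangles of `G`. -/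
def IsTrianglePacking (G : SimpleGraph V) (Y : Finset (Finset V)) : Prop :=
  (∀ t ∈ Y, G.IsNClique 3 t) ∧
    ∀ s ∈ Y, ∀ t ∈ Y, s ≠ t →
      ∀ e ∈ G.edgeSet, ¬ ((∀ v ∈ e, v ∈ s) ∧ (∀ v ∈ e, v ∈ t))

/-- `tau G` is the minimum size of a triangle transversal of `G`. -/
noncomputable def tau (G : SimpleGraph V) : ℕ :=
  sInf {n | ∃ X : Finset (Sym2 V), IsTriangleTransversal G X ∧ X.card = n}

/-- `nu G` is the maximum size of a triangle packing of `G`. -/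
noncomputable def nu (G : SimpleGraph V) : ℕ :=
  sSup {n | ∃ Y : Finset (Finset V), IsTrianglePacking G Y ∧ Y.card = n}

/-- `(V₀, X, Y)` is a reducing triple for `G`: `V₀` is a nonempty set of vertices,
`X` a set of edges of `G`, `Y` a triangle packing of `G`, with (i) `|X| ≤ 2|Y|`;
(ii) every triangle of `G` containing a vertex of `V₀` contains an edge of `X`;
(iii) every edge of a triangle of `Y` with both endpoints outside `V₀` lies in `X`. -/
def IsReducingTriple (G : SimpleGraph V) (V₀ : Finset V) (X : Finset (Sym2 V))
    (Y : Finset (Finset V)) : Prop :=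
  V₀.Nonempty ∧ ↑X ⊆ G.edgeSet ∧ IsTrianglePacking G Y ∧
    X.card ≤ 2 * Y.card ∧
    (∀ t : Finset V, G.IsNClique 3 t → (∃ v ∈ V₀, v ∈ t) → ∃ e ∈ X, ∀ v ∈ e, v ∈ t) ∧
    (∀ t ∈ Y, ∀ u v : V, u ∈ t → v ∈ t → G.Adj u v →
      u ∉ V₀ → v ∉ V₀ → s(u, v) ∈ X)

/-- `G` is irreducible if it admits no reducing triple. -/
def IrreducibleGraph (G : SimpleGraph V) : Prop :=
  ¬ ∃ (V₀ : Finset V) (X : Finset (Sym2 V)) (Y : Finset (Finset V)),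
      IsReducingTriple G V₀ X Y

/-!
A transversal of `G' = G - X - V₀` together with `X` is a transversal of `G`, since a triangle of
`G` that meets `V₀` is hit by `X` and one that avoids both `V₀` and `X` survives in `G'`. A packing
of `G'` together with `Y` is a packing of `G`, since an edge of a triangle of `Y` either meets `V₀`
or lies in `X`, and so is not in `G'`. Hence `τ(G) ≤ |X| + τ(G')` and `|Y| + ν(G') ≤ ν(G)`.

On an infinite graph `tau` may be an infimum of `∅` and `nu` a supremum of an unbounded set, both
with the junk value `0`. A finite triangle transversal excludes both, as distinct triangles of a
packing contain distinct edges of it.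
-/

section TauNu

variable {G : SimpleGraph V} {X : Finset (Sym2 V)} {Y : Finset (Finset V)}

lemma exists_isTriangleTransversal_of_finite_edgeSet (hG : G.edgeSet.Finite) :
    ∃ X, IsTriangleTransversal G X := by
  classical
  refine ⟨hG.toFinset, hG.coe_toFinset.subset, fun t ht ↦ ?_⟩
  obtain ⟨a, b, c, hab, -, -, rfl⟩ := is3Clique_iff.mp ht
  exact ⟨s(a, b), hG.mem_toFinset.mpr hab, by simp⟩

lemma isTrianglePacking_iff_pairwise_inter_subsingleton :
    IsTrianglePacking G Y ↔ (∀ t ∈ Y, G.IsNClique 3 t) ∧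
      (Y : Set (Finset V)).Pairwise fun s t ↦ (s ∩ t : Set V).Subsingleton := by
  refine and_congr_right fun hY ↦
    ⟨fun h s hs t ht hst u hu v hv ↦ ?_, fun h s hs t ht hst e ↦ ?_⟩
  · by_contra huv
    exact h s hs t ht hst s(u, v) ((hY s hs).isClique hu.1 hv.1 huv)
      ⟨by simpa using ⟨hu.1, hv.1⟩, by simpa using ⟨hu.2, hv.2⟩⟩
  · induction e with
    | _ u v =>
      rintro huv ⟨hes, het⟩
      have hu : u ∈ (s ∩ t : Set V) := ⟨hes u (Sym2.mem_mk_left u v), het u (Sym2.mem_mk_left u v)⟩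
      have hv : v ∈ (s ∩ t : Set V) :=
        ⟨hes v (Sym2.mem_mk_right u v), het v (Sym2.mem_mk_right u v)⟩
      exact huv.ne (h hs ht hst hu hv)

lemma IsTrianglePacking.card_le_card (hY : IsTrianglePacking G Y)
    (hX : IsTriangleTransversal G X) : Y.card ≤ X.card := by
  refine Finset.card_le_card_of_forall_subsingleton (fun t e ↦ ∀ v ∈ e, v ∈ t)
    (fun t ht ↦ hX.2 t (hY.1 t ht)) fun e he s hs t ht ↦ ?_
  by_contra hst
  exact hY.2 s hs.1 t ht.1 hst e (hX.1 he) ⟨hs.2, ht.2⟩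

lemma bddAbove_card_isTrianglePacking (hG : ∃ X, IsTriangleTransversal G X) :
    BddAbove {n | ∃ Y, IsTrianglePacking G Y ∧ Y.card = n} := by
  obtain ⟨X, hX⟩ := hG
  refine ⟨X.card, ?_⟩
  rintro _ ⟨Y, hY, rfl⟩
  exact hY.card_le_card hX

lemma tau_le_card (hX : IsTriangleTransversal G X) : tau G ≤ X.card :=
  Nat.sInf_le ⟨X, hX, rfl⟩

lemma exists_isTriangleTransversal_card_eq_tau (hG : ∃ X, IsTriangleTransversal G X) :
    ∃ X, IsTriangleTransversal G X ∧ X.card = tau G :=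
  Nat.sInf_mem (s := {n | ∃ X, IsTriangleTransversal G X ∧ X.card = n})
    (hG.imp' Finset.card fun X hX ↦ ⟨X, hX, rfl⟩)

lemma card_le_nu (hG : ∃ X, IsTriangleTransversal G X) (hY : IsTrianglePacking G Y) :
    Y.card ≤ nu G :=
  le_csSup (bddAbove_card_isTrianglePacking hG) ⟨Y, hY, rfl⟩

lemma exists_isTrianglePacking_card_eq_nu (hG : ∃ X, IsTriangleTransversal G X) :
    ∃ Y, IsTrianglePacking G Y ∧ Y.card = nu G :=
  Nat.sSup_mem (s := {n | ∃ Y, IsTrianglePacking G Y ∧ Y.card = n})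
    ⟨0, ∅, by simp [IsTrianglePacking], Finset.card_empty⟩ (bddAbove_card_isTrianglePacking hG)

end TauNu

section Functoriality

variable {W : Type*} {G : SimpleGraph V} {H : SimpleGraph W} {Y Z : Finset (Finset V)}

lemma exists_isTriangleTransversal_of_map_le (f : W ↪ V) (hf : H.map f ≤ G)
    (hG : ∃ X, IsTriangleTransversal G X) : ∃ X, IsTriangleTransversal H X := by
  classical
  obtain ⟨X, hXG, hX⟩ := hG
  refine ⟨{e ∈ X.preimage f.sym2Map f.sym2Map.injective.injOn | e ∈ H.edgeSet},
    fun e he ↦ (Finset.mem_filter.mp he).2, fun t ht ↦ ?_⟩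
  obtain ⟨e, he, het⟩ := hX _ (ht.map.mono hf)
  obtain ⟨e, het', rfl⟩ : ∃ e' ∈ t.sym2, f.sym2Map e' = e := by
    rwa [← Finset.mem_map, ← Finset.sym2_map, Finset.mem_sym2_iff]
  induction e with
  | _ u v =>
    obtain ⟨hu, hv⟩ := Finset.mk_mem_sym2_iff.mp het'
    have huv : u ≠ v := fun h ↦ (G.mem_edgeSet.mp (hXG he)).ne (congrArg f h)
    exact ⟨s(u, v), Finset.mem_filter.mpr ⟨Finset.mem_preimage.mpr he, ht.isClique hu hv huv⟩,
      Finset.mem_sym2_iff.mp het'⟩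

lemma IsTrianglePacking.map {Y : Finset (Finset W)} (hY : IsTrianglePacking H Y) (f : W ↪ V) :
    IsTrianglePacking (H.map f) (Y.map (Finset.mapEmbedding f).toEmbedding) := by
  obtain ⟨hYH, hdisj⟩ := isTrianglePacking_iff_pairwise_inter_subsingleton.mp hY
  refine isTrianglePacking_iff_pairwise_inter_subsingleton.mpr
    ⟨Finset.forall_mem_map.mpr fun t ht ↦ (hYH t ht).map, ?_⟩
  rw [Finset.coe_map, (Finset.mapEmbedding f).toEmbedding.injective.injOn.pairwise_image]
  intro s hs t ht hst
  simpa [Function.onFun, Set.image_inter f.injective] using (hdisj hs ht hst).image f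

lemma IsTrianglePacking.mono {G' : SimpleGraph V} (hY : IsTrianglePacking G Y) (hG : G ≤ G') :
    IsTrianglePacking G' Y := by
  rw [isTrianglePacking_iff_pairwise_inter_subsingleton] at hY ⊢
  exact ⟨fun t ht ↦ (hY.1 t ht).mono hG, hY.2⟩

lemma IsTrianglePacking.disjoint_of_inter_subsingleton (hY : IsTrianglePacking G Y)
    (hYZ : ∀ s ∈ Y, ∀ t ∈ Z, (s ∩ t : Set V).Subsingleton) : Disjoint Y Z := by
  refine Finset.disjoint_left.mpr fun t htY htZ ↦ ?_
  have hcard : t.card ≤ 1 := by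
    simpa [Finset.card_le_one_iff_subsingleton] using hYZ t htY t htZ
  have hcard' : t.card = 3 := (hY.1 t htY).card_eq
  lia

lemma IsTrianglePacking.union [DecidableEq V] (hY : IsTrianglePacking G Y)
    (hZ : IsTrianglePacking G Z) (hYZ : ∀ s ∈ Y, ∀ t ∈ Z, (s ∩ t : Set V).Subsingleton) :
    IsTrianglePacking G (Y ∪ Z) := by
  rw [isTrianglePacking_iff_pairwise_inter_subsingleton] at hY hZ ⊢
  refine ⟨Finset.forall_mem_union.mpr ⟨hY.1, hZ.1⟩, ?_⟩
  rw [Finset.coe_union, Set.pairwise_union]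
  exact ⟨hY.2, hZ.2, fun s hs t ht _ ↦ ⟨hYZ s hs t ht, Set.inter_comm _ _ ▸ hYZ s hs t ht⟩⟩

end Functoriality

lemma isNClique_deleteEdges {G : SimpleGraph V} {X : Set (Sym2 V)} {t : Finset V} {n : ℕ}
    (ht : G.IsNClique n t) (hX : ¬ ∃ e ∈ X, ∀ v ∈ e, v ∈ t) :
    (G.deleteEdges X).IsNClique n t := by
  refine ⟨fun u hu v hv huv ↦ deleteEdges_adj.mpr ⟨ht.isClique hu hv huv, fun he ↦ hX ?_⟩,
    ht.card_eq⟩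
  exact ⟨s(u, v), he, Sym2.ball.mpr ⟨hu, hv⟩⟩

/-- The graph `G - X - V₀` left after deleting the edges in `X` and the vertices in `V₀`, on the
subtype of the remaining vertices. -/
def reducedGraph (G : SimpleGraph V) (V₀ : Finset V) (X : Finset (Sym2 V)) :
    SimpleGraph {v : V | v ∉ V₀} :=
  (G.deleteEdges (↑X : Set (Sym2 V))).induce {v : V | v ∉ V₀}

section ReducedGraph

variable {G : SimpleGraph V} {V₀ : Finset V} {X : Finset (Sym2 V)} {Y : Finset (Finset V)}

lemma map_reducedGraph_le : (reducedGraph G V₀ X).map (Function.Embedding.subtype _) ≤ G :=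
  map_le_iff_le_comap _ _ _ |>.mpr fun _ _ huv ↦ (deleteEdges_adj.mp huv).1

lemma exists_isTriangleTransversal_reducedGraph (hG : ∃ X, IsTriangleTransversal G X) :
    ∃ X', IsTriangleTransversal (reducedGraph G V₀ X) X' :=
  exists_isTriangleTransversal_of_map_le _ map_reducedGraph_le hG

lemma exists_isNClique_reducedGraph_map_eq {t : Finset V} {n : ℕ} (ht : G.IsNClique n t)
    (htV₀ : ∀ v ∈ t, v ∉ V₀) (htX : ¬ ∃ e ∈ X, ∀ v ∈ e, v ∈ t) :
    ∃ t', (reducedGraph G V₀ X).IsNClique n t' ∧ t'.map (Function.Embedding.subtype _) = t := by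
  classical
  have hmap := Finset.subtype_map_of_mem (p := (· ∈ {v : V | v ∉ V₀})) htV₀
  refine ⟨_, ?_, hmap⟩
  rw [reducedGraph, isNClique_induce_iff, hmap]
  exact isNClique_deleteEdges ht htX

lemma isTriangleTransversal_union_map [DecidableEq V] (hXG : ↑X ⊆ G.edgeSet)
    (hXV₀ : ∀ t, G.IsNClique 3 t → (∃ v ∈ V₀, v ∈ t) → ∃ e ∈ X, ∀ v ∈ e, v ∈ t)
    {X' : Finset (Sym2 {v : V | v ∉ V₀})} (hX' : IsTriangleTransversal (reducedGraph G V₀ X) X') :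
    IsTriangleTransversal G (X ∪ X'.map (Function.Embedding.subtype _).sym2Map) := by
  refine ⟨?_, fun t ht ↦ ?_⟩
  · rw [Finset.coe_union, Finset.coe_map]
    refine Set.union_subset hXG ?_
    calc _ ⊆ _ '' (reducedGraph G V₀ X).edgeSet := Set.image_mono hX'.1
      _ = ((reducedGraph G V₀ X).map (Function.Embedding.subtype _)).edgeSet :=
          (edgeSet_map _ _).symm
      _ ⊆ G.edgeSet := edgeSet_mono map_reducedGraph_le
  · by_cases htX : ∃ e ∈ X, ∀ v ∈ e, v ∈ t
    · exact htX.imp fun e he ↦ he.imp_left (Finset.mem_union_left _)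
    · have htV₀ : ∀ v ∈ t, v ∉ V₀ := fun v hv hv₀ ↦ htX (hXV₀ t ht ⟨v, hv₀, hv⟩)
      obtain ⟨t, ht', rfl⟩ := exists_isNClique_reducedGraph_map_eq ht htV₀ htX
      obtain ⟨e, he, het⟩ := hX'.2 t ht'
      refine ⟨_, Finset.mem_union_right _ (Finset.mem_map_of_mem _ he), fun v hv ↦ ?_⟩
      obtain ⟨w, hw, rfl⟩ := Sym2.mem_map.mp hv
      exact Finset.mem_map_of_mem _ (het w hw)

lemma inter_subsingleton_of_isClique_reducedGraph {s : Set V} {t : Set {v : V | v ∉ V₀}}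
    (hsX : ∀ u v, u ∈ s → v ∈ s → G.Adj u v → u ∉ V₀ → v ∉ V₀ → s(u, v) ∈ X)
    (ht : (reducedGraph G V₀ X).IsClique t) : (s ∩ Subtype.val '' t).Subsingleton := by
  rintro _ ⟨hus, u, hut, rfl⟩ _ ⟨hvs, v, hvt, rfl⟩
  by_contra huv
  obtain ⟨hadj, huvX⟩ := deleteEdges_adj.mp (ht hut hvt (ne_of_apply_ne _ huv))
  exact huvX (hsX u v hus hvs hadj u.2 v.2)

theorem tau_le_card_add_tau_reducedGraph (hG : ∃ X, IsTriangleTransversal G X)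
    (hXG : ↑X ⊆ G.edgeSet)
    (hXV₀ : ∀ t, G.IsNClique 3 t → (∃ v ∈ V₀, v ∈ t) → ∃ e ∈ X, ∀ v ∈ e, v ∈ t) :
    tau G ≤ X.card + tau (reducedGraph G V₀ X) := by
  classical
  obtain ⟨X', hX', hcard⟩ := exists_isTriangleTransversal_card_eq_tau
    (exists_isTriangleTransversal_reducedGraph (V₀ := V₀) (X := X) hG)
  calc tau G ≤ (X ∪ X'.map (Function.Embedding.subtype _).sym2Map).card :=
        tau_le_card (isTriangleTransversal_union_map hXG hXV₀ hX')
    _ ≤ X.card + (X'.map (Function.Embedding.subtype _).sym2Map).card := Finset.card_union_le _ _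
    _ = X.card + tau (reducedGraph G V₀ X) := by rw [Finset.card_map, hcard]

theorem card_add_nu_reducedGraph_le_nu (hG : ∃ X, IsTriangleTransversal G X)
    (hY : IsTrianglePacking G Y)
    (hYX : ∀ t ∈ Y, ∀ u v, u ∈ t → v ∈ t → G.Adj u v → u ∉ V₀ → v ∉ V₀ → s(u, v) ∈ X) :
    Y.card + nu (reducedGraph G V₀ X) ≤ nu G := by
  classical
  obtain ⟨Y', hY', hcard⟩ := exists_isTrianglePacking_card_eq_nu
    (exists_isTriangleTransversal_reducedGraph (V₀ := V₀) (X := X) hG)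
  set Z := Y'.map (Finset.mapEmbedding (Function.Embedding.subtype _)).toEmbedding
  have hZ : IsTrianglePacking G Z := (hY'.map _).mono map_reducedGraph_le
  have hYZ : ∀ s ∈ Y, ∀ t ∈ Z, (s ∩ t : Set V).Subsingleton :=
    fun s hs ↦ Finset.forall_mem_map.mpr fun t ht ↦ by
      simpa using inter_subsingleton_of_isClique_reducedGraph (hYX s hs) (hY'.1 t ht).isClique
  calc Y.card + nu (reducedGraph G V₀ X) = Y.card + Z.card := by rw [Finset.card_map, hcard]
    _ = (Y ∪ Z).card :=
        (Finset.card_union_of_disjoint (hY.disjoint_of_inter_subsingleton hYZ)).symm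
    _ ≤ nu G := card_le_nu hG (hY.union hZ hYZ)

end ReducedGraph

theorem tuza_of_reducing_triple_general {G : SimpleGraph V} {V₀ : Finset V} {X : Finset (Sym2 V)}
    {Y : Finset (Finset V)} (hG : ∃ Z, IsTriangleTransversal G Z) (hred : IsReducingTriple G V₀ X Y)
    (h' : tau (reducedGraph G V₀ X) ≤ 2 * nu (reducedGraph G V₀ X)) :
    tau G ≤ 2 * nu G := by
  obtain ⟨-, hXG, hY, hXY, hXV₀, hYX⟩ := hred
  calc tau G ≤ X.card + tau (reducedGraph G V₀ X) := tau_le_card_add_tau_reducedGraph hG hXG hXV₀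
    _ ≤ 2 * Y.card + 2 * nu (reducedGraph G V₀ X) := Nat.add_le_add hXY h'
    _ = 2 * (Y.card + nu (reducedGraph G V₀ X)) := (Nat.mul_add _ _ _).symm
    _ ≤ 2 * nu G := Nat.mul_le_mul_left 2 (card_add_nu_reducedGraph_le_nu hG hY hYX)

/-- If `(V₀, X, Y)` is a reducing triple for `G` and `G' = G - X - V₀` satisfies
`τ(G') ≤ 2·ν(G')`, then `τ(G) ≤ 2·ν(G)`. -/
theorem tuza_of_reducing_triple (V : Type) [Fintype V] [DecidableEq V]
    (G : SimpleGraph V) (V₀ : Finset V) (X : Finset (Sym2 V)) (Y : Finset (Finset V))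
    (hred : IsReducingTriple G V₀ X Y)
    (h' : tau ((G.deleteEdges (↑X : Set (Sym2 V))).induce {v : V | v ∉ V₀}) ≤
          2 * nu ((G.deleteEdges (↑X : Set (Sym2 V))).induce {v : V | v ∉ V₀})) :
    tau G ≤ 2 * nu G :=
  tuza_of_reducing_triple_general
    (exists_isTriangleTransversal_of_finite_edgeSet G.edgeSet.toFinite) hred h'
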